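/- Linear-time complexity of Memo-la (Theorem 3): For every la-NFA A = (P, Q, q0, F, T), every input string w over Σ, and every position i ∈ {0, …, |w|}, the call Memo-la^{M0}_{A,w}(q0, i) terminates, and the total number of recursive calls it makes is at most #in(A) · |P| · (|w| + 1), where #in(A) = max_{q ∈ P} #in(q); in particular, for a fixed la-NFA A the number of recursive calls is O(|w|). -/

import Mathlib

namespace RegexMemo

/-! ## Generic runs, `φ`, `sub`, `sub*` -/

variable {α : Type}

/-- `φ_s(ℓ, n)`: the index of the result value of the call at index `ℓ`. -/
def phiAux (isRet : α → Bool) (s : List α) (ℓ n : ℕ) : Option ℕ :=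
  match h : s[ℓ]? with
  | none => none
  | some e =>
    if isRet e then
      if n ≤ 1 then some ℓ
      else phiAux isRet s (ℓ + 1) (n - 1)
    else phiAux isRet s (ℓ + 1) (n + 1)
termination_by s.length - ℓ
decreasing_by
  all_goals
    have hl : ℓ < s.length := by
      by_contra hc
      have : s[ℓ]? = none := List.getElem?_eq_none (by omega)
      simp [this] at h
    omega

/-- `φ_s(ℓ) = φ_s(ℓ, 0)`. -/
def phi (isRet : α → Bool) (s : List α) (ℓ : ℕ) : Option ℕ := phiAux isRet s ℓ 0

/-- `sub(s, ℓ)`: replace the memoization-table invocation at index `ℓ` (an element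
`M(q,i)` together with its immediately following result) by `C(q,i)` followed by the
subsequence `s[ℓ'+1] … s[φ_s(ℓ')]`, where `ℓ'` is the first index with `s[ℓ'] = C(q,i)`.
Here `m2c` maps a memoization element `M(q,i)` to the corresponding call element `C(q,i)`
(and everything else to `none`), and `isRet` recognizes result elements. -/
def subExpand [DecidableEq α] (m2c : α → Option α) (isRet : α → Bool)
    (s : List α) (ℓ : ℕ) : Option (List α) :=
  match s[ℓ]? with
  | some e =>
    match m2c e with
    | some c =>
      match s.findIdx? (· == c) with
      | some ℓ' =>
        match phi isRet s ℓ' with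
        | some m =>
          some (s.take ℓ ++ [c] ++ ((s.drop (ℓ' + 1)).take (m - ℓ')) ++ s.drop (ℓ + 2))
        | none => none
      | none => none
    | none => none
  | none => none

/-- `sub*`: repeatedly locate the first memoization element and expand it,
until no memoization element remains. `SubStar m2c isRet s t` means `sub*(s) = t`. -/
inductive SubStar [DecidableEq α] (m2c : α → Option α) (isRet : α → Bool) :
    List α → List α → Prop where
  | done {s : List α} : s.findIdx? (fun e => (m2c e).isSome) = none →
      SubStar m2c isRet s s
  | step {s s' t : List α} {ℓ : ℕ} :
      s.findIdx? (fun e => (m2c e).isSome) = some ℓ →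
      subExpand m2c isRet s ℓ = some s' →
      SubStar m2c isRet s' t →
      SubStar m2c isRet s t

/-- The number of (recursive) calls recorded in a run: the number of `C`/`M` elements. -/
def callCount (isCall : α → Bool) (s : List α) : ℕ := (s.filter isCall).length

variable {Sigma S : Type}

/-- Results of backtracking matching: `SuccessAt i'` or `Failure`. -/
inductive Result : Type where
  | successAt : ℕ → Result
  | failure : Result
deriving DecidableEq

/-! ## Plain NFAs -/

/-- Transitions of a plain NFA. -/
inductive Trans (Sigma S : Type) : Type where
  | eps : S → Trans Sigma S
  | branch : S → S → Trans Sigma S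
  | char : Sigma → S → Trans Sigma S

/-- A (plain) NFA over the alphabet `Sigma` with (finite) state type `S`:
an initial state, a set of accepting states, and a transition function
(whose value is only relevant on non-accepting states). -/
structure NFA (Sigma S : Type) where
  q0 : S
  F : Set S
  T : S → Trans Sigma S

/-- One ε-step: an `Eps` or `Branch` transition of a non-accepting state. -/
def NFA.epsStep (A : NFA Sigma S) (q q' : S) : Prop :=
  q ∉ A.F ∧ (A.T q = Trans.eps q' ∨ (∃ q'', A.T q = Trans.branch q' q'') ∨
    (∃ q'', A.T q = Trans.branch q'' q'))

/-- The NFA has no ε-loops. -/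
def NFA.NoEpsLoops (A : NFA Sigma S) : Prop :=
  ∀ q : S, ¬ Relation.TransGen A.epsStep q q

open Classical in
/-- The in-degree `#in(q)` of a state of a plain NFA. -/
noncomputable def NFA.inDeg [Fintype S] (A : NFA Sigma S) (q : S) : ℕ :=
  (Finset.univ.filter fun q' : S => q' ∉ A.F ∧ A.T q' = Trans.eps q).card +
  (Finset.univ.filter fun q' : S => q' ∉ A.F ∧ ∃ σ, A.T q' = Trans.char σ q).card +
  (Finset.univ.filter fun q' : S => q' ∉ A.F ∧ ∃ q'', A.T q' = Trans.branch q q'').card +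
  (Finset.univ.filter fun q' : S => q' ∉ A.F ∧ ∃ q'', A.T q' = Trans.branch q'' q).card +
  (if q = A.q0 then 1 else 0)

/-- The maximal in-degree `#in(A)` of a plain NFA. -/
noncomputable def NFA.inDegMax [Fintype S] (A : NFA Sigma S) : ℕ :=
  Finset.univ.sup fun q : S => A.inDeg q

/-- Elements of runs of `Match`/`Memo`: calls `C(q,i)`, memoization-table invocations
`M(q,i)`, and results `S(i')` and `F`. -/
inductive RunElem (S : Type) : Type where
  | call : S → ℕ → RunElem S
  | memo : S → ℕ → RunElem S
  | succ : ℕ → RunElem S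
  | fail : RunElem S
deriving DecidableEq

/-- The run element recording the return of a result. -/
def Result.elem {S : Type} : Result → RunElem S
  | .successAt i => .succ i
  | .failure => .fail

def RunElem.isRet : RunElem S → Bool
  | .succ _ => true
  | .fail => true
  | _ => false

def RunElem.isCall : RunElem S → Bool
  | .call _ _ => true
  | .memo _ _ => true
  | _ => false

/-- `M(q,i) ↦ C(q,i)`. -/
def memoToCall : RunElem S → Option (RunElem S)
  | .memo q i => some (.call q i)
  | _ => none

/-- Big-step semantics (together with the produced run) of the backtracking
matching algorithm `Match` for plain NFAs:
`MatchRun A w q i r s` means the call `Match_{A,w}(q, i)` terminates with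
result `r` and produces the run `s`. -/
inductive MatchRun (A : NFA Sigma S) (w : List Sigma) :
    S → ℕ → Result → List (RunElem S) → Prop where
  | accept {q : S} {i : ℕ} : q ∈ A.F →
      MatchRun A w q i (.successAt i) [.call q i, .succ i]
  | eps {q q' : S} {i : ℕ} {r : Result} {s : List (RunElem S)} :
      q ∉ A.F → A.T q = Trans.eps q' →
      MatchRun A w q' i r s →
      MatchRun A w q i r (.call q i :: s ++ [r.elem])
  | branchSucc {q q' q'' : S} {i i' : ℕ} {s : List (RunElem S)} :
      q ∉ A.F → A.T q = Trans.branch q' q'' →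
      MatchRun A w q' i (.successAt i') s →
      MatchRun A w q i (.successAt i') (.call q i :: s ++ [RunElem.succ i'])
  | branchFail {q q' q'' : S} {i : ℕ} {r : Result} {s s' : List (RunElem S)} :
      q ∉ A.F → A.T q = Trans.branch q' q'' →
      MatchRun A w q' i .failure s →
      MatchRun A w q'' i r s' →
      MatchRun A w q i r (.call q i :: s ++ s' ++ [r.elem])
  | charSucc {q q' : S} {σ : Sigma} {i : ℕ} {r : Result} {s : List (RunElem S)} :
      q ∉ A.F → A.T q = Trans.char σ q' →
      w[i]? = some σ →
      MatchRun A w q' (i + 1) r s →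
      MatchRun A w q i r (.call q i :: s ++ [r.elem])
  | charFail {q q' : S} {σ : Sigma} {i : ℕ} :
      q ∉ A.F → A.T q = Trans.char σ q' →
      w[i]? ≠ some σ →
      MatchRun A w q i .failure [.call q i, .fail]

/-- Record `M(q,i) := Failure` in the memoization table if the result is a failure. -/
def recFail [DecidableEq S] (M : S × ℕ → Bool) (q : S) (i : ℕ) : Result → (S × ℕ → Bool)
  | .failure => fun p => if p = (q, i) then true else M p
  | _ => M

/-- Big-step semantics (with resulting memoization table and produced run) of the
memoized backtracking matching algorithm `Memo` for plain NFAs: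
`MemoRun A w q i M M' r s` means the call `Memo^M_{A,w}(q, i)` terminates with result
`r`, final memoization table `M'` (where `M p = true` means `Failure` is recorded at the
key `p`), and produces the run `s`. -/
inductive MemoRun [DecidableEq S] (A : NFA Sigma S) (w : List Sigma) :
    S → ℕ → (S × ℕ → Bool) → (S × ℕ → Bool) → Result → List (RunElem S) → Prop where
  | memoHit {q : S} {i : ℕ} {M : S × ℕ → Bool} : M (q, i) = true →
      MemoRun A w q i M M .failure [.memo q i, .fail]
  | accept {q : S} {i : ℕ} {M : S × ℕ → Bool} : M (q, i) = false → q ∈ A.F →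
      MemoRun A w q i M M (.successAt i) [.call q i, .succ i]
  | eps {q q' : S} {i : ℕ} {M M' : S × ℕ → Bool} {r : Result} {s : List (RunElem S)} :
      M (q, i) = false → q ∉ A.F → A.T q = Trans.eps q' →
      MemoRun A w q' i M M' r s →
      MemoRun A w q i M (recFail M' q i r) r (.call q i :: s ++ [r.elem])
  | branchSucc {q q' q'' : S} {i i' : ℕ} {M M' : S × ℕ → Bool} {s : List (RunElem S)} :
      M (q, i) = false → q ∉ A.F → A.T q = Trans.branch q' q'' →
      MemoRun A w q' i M M' (.successAt i') s →
      MemoRun A w q i M M' (.successAt i') (.call q i :: s ++ [RunElem.succ i'])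
  | branchFail {q q' q'' : S} {i : ℕ} {M M' M'' : S × ℕ → Bool} {r : Result}
      {s s' : List (RunElem S)} :
      M (q, i) = false → q ∉ A.F → A.T q = Trans.branch q' q'' →
      MemoRun A w q' i M M' .failure s →
      MemoRun A w q'' i M' M'' r s' →
      MemoRun A w q i M (recFail M'' q i r) r (.call q i :: s ++ s' ++ [r.elem])
  | charSucc {q q' : S} {σ : Sigma} {i : ℕ} {M M' : S × ℕ → Bool} {r : Result}
      {s : List (RunElem S)} :
      M (q, i) = false → q ∉ A.F → A.T q = Trans.char σ q' →
      w[i]? = some σ →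
      MemoRun A w q' (i + 1) M M' r s →
      MemoRun A w q i M (recFail M' q i r) r (.call q i :: s ++ [r.elem])
  | charFail {q q' : S} {σ : Sigma} {i : ℕ} {M : S × ℕ → Bool} :
      M (q, i) = false → q ∉ A.F → A.T q = Trans.char σ q' →
      w[i]? ≠ some σ →
      MemoRun A w q i M (recFail M q i .failure) .failure [.call q i, .fail]

/-! ## NFAs with sub-automata -/

/-- Kind labels of sub-automaton transitions: positive/negative look-ahead/look-behind
and atomic grouping. -/
inductive Kind : Type where
  | pla | nla | plb | nlb | at
deriving DecidableEq

mutual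
/-- An NFA with sub-automata `⟨Q, q0, F, T⟩`: a list of top-level states, an initial
state, accepting states, and a transition function (relevant on non-accepting top-level
states) whose transitions may be labelled with further NFAs with sub-automata. -/
inductive SubNFA (Sigma S : Type) : Type where
  | mk : List S → S → List S → (S → SubTrans Sigma S) → SubNFA Sigma S

/-- Transitions of an NFA with sub-automata. -/
inductive SubTrans (Sigma S : Type) : Type where
  | eps : S → SubTrans Sigma S
  | branch : S → S → SubTrans Sigma S
  | char : Sigma → S → SubTrans Sigma S
  | sub : Kind → SubNFA Sigma S → S → SubTrans Sigma S
end

/-- Top-level states `Q`. -/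
def SubNFA.Q : SubNFA Sigma S → List S
  | .mk Q _ _ _ => Q

/-- Initial state `q0`. -/
def SubNFA.q0 : SubNFA Sigma S → S
  | .mk _ q0 _ _ => q0

/-- Accepting states `F`. -/
def SubNFA.F : SubNFA Sigma S → List S
  | .mk _ _ F _ => F

/-- Transition function `T`. -/
def SubNFA.T : SubNFA Sigma S → S → SubTrans Sigma S
  | .mk _ _ _ T => T

mutual
/-- All automata occurring within an NFA with sub-automata (including itself), each
together with its nesting depth of atomic grouping (the number of enclosing
`at`-sub-automaton boundaries). -/
def SubNFA.compsD : SubNFA Sigma S → List (SubNFA Sigma S × ℕ)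
  | .mk Q q0 F T => (.mk Q q0 F T, 0) :: Q.flatMap (fun q => SubTrans.subCompsD (T q))

def SubTrans.subCompsD : SubTrans Sigma S → List (SubNFA Sigma S × ℕ)
  | .sub k A' _ => (SubNFA.compsD A').map (fun p => (p.1, p.2 + (if k = Kind.at then 1 else 0)))
  | _ => []
end

/-- All automata occurring within `A` (including `A` itself). -/
def SubNFA.comps (A : SubNFA Sigma S) : List (SubNFA Sigma S) :=
  A.compsD.map Prod.fst

/-- The set (list) of all states `P` occurring within `A`. -/
def SubNFA.allStates (A : SubNFA Sigma S) : List S :=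
  A.comps.flatMap SubNFA.Q

/-- The nesting depth of atomic grouping `ν_A(q)` of a state `q` of `A`. -/
def SubNFA.nu [DecidableEq S] (A : SubNFA Sigma S) (q : S) : ℕ :=
  (A.compsD.map (fun p => if q ∈ p.1.Q then p.2 else 0)).sum

/-- The maximal nesting depth of atomic grouping `ν(A)`. -/
def SubNFA.nuMax [DecidableEq S] (A : SubNFA Sigma S) : ℕ :=
  (A.allStates.map A.nu).foldr max 0

/-- Local wellformedness of one automaton: the initial state is a top-level state,
accepting states are top-level states, and transitions of non-accepting top-level
states lead to top-level states. -/
def SubNFA.LocalOK (B : SubNFA Sigma S) : Prop :=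
  B.q0 ∈ B.Q ∧ (∀ f ∈ B.F, f ∈ B.Q) ∧ ∀ q ∈ B.Q, q ∉ B.F →
    match B.T q with
    | .eps q' => q' ∈ B.Q
    | .branch q' q'' => q' ∈ B.Q ∧ q'' ∈ B.Q
    | .char _ q' => q' ∈ B.Q
    | .sub _ _ q' => q' ∈ B.Q

/-- Wellformedness of an NFA with sub-automata: every component automaton is locally
wellformed, and all the state lists are disjoint and duplicate-free (so that `P` is
the disjoint union of the top-level state sets of all components). -/
def SubNFA.WF (A : SubNFA Sigma S) : Prop :=
  (∀ B ∈ A.comps, B.LocalOK) ∧ A.allStates.Nodup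

/-- The kind labels of all sub-automaton transitions occurring in `A`. -/
def SubNFA.kinds [DecidableEq S] (A : SubNFA Sigma S) : List Kind :=
  A.comps.flatMap fun B =>
    (B.Q.filter (fun q => decide (q ∉ B.F))).filterMap fun q =>
      match B.T q with
      | .sub k _ _ => some k
      | _ => none

/-- A la-NFA: all kind labels are look-around labels (for simplicity, only positive
look-ahead `pla` is treated). -/
def SubNFA.IsLaNFA [DecidableEq S] (A : SubNFA Sigma S) : Prop :=
  ∀ k ∈ A.kinds, k = Kind.pla

/-- An at-NFA: all kind labels are `at` (atomic grouping). -/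
def SubNFA.IsAtNFA [DecidableEq S] (A : SubNFA Sigma S) : Prop :=
  ∀ k ∈ A.kinds, k = Kind.at

/-- A (la,at)-NFA in which (for simplicity) only the kinds `pla` and `at` occur. -/
def SubNFA.IsLaAtNFA [DecidableEq S] (A : SubNFA Sigma S) : Prop :=
  ∀ k ∈ A.kinds, k = Kind.pla ∨ k = Kind.at

/-- One global ε-step of an NFA with sub-automata: an `Eps` or `Branch` transition, or a
`Sub` transition with a look-around kind (from the transition's source to its successor),
of a non-accepting top-level state of any component automaton. -/
def SubNFA.epsStep (A : SubNFA Sigma S) (q q' : S) : Prop :=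
  ∃ B ∈ A.comps, q ∈ B.Q ∧ q ∉ B.F ∧
    (B.T q = SubTrans.eps q' ∨
     (∃ q'', B.T q = SubTrans.branch q' q'') ∨
     (∃ q'', B.T q = SubTrans.branch q'' q') ∨
     (∃ k A'', B.T q = SubTrans.sub k A'' q' ∧ k ≠ Kind.at))

/-- The NFA with sub-automata has no ε-loops. -/
def SubNFA.NoEpsLoops (A : SubNFA Sigma S) : Prop :=
  ∀ q : S, ¬ Relation.TransGen A.epsStep q q

/-- All pairs (state, transition) of non-accepting top-level states of all component
automata of `A`. -/
def SubNFA.allTransNF [DecidableEq S] (A : SubNFA Sigma S) : List (S × SubTrans Sigma S) :=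
  A.comps.flatMap fun B => (B.Q.filter (fun q => decide (q ∉ B.F))).map fun q => (q, B.T q)

/-- How many of the buckets in the definition of the in-degree of `q` a given
transition contributes to. -/
def SubTrans.hits [DecidableEq S] (t : SubTrans Sigma S) (q : S) : ℕ :=
  match t with
  | .eps q' => if q' = q then 1 else 0
  | .char _ q' => if q' = q then 1 else 0
  | .branch q' q'' => (if q' = q then 1 else 0) + (if q'' = q then 1 else 0)
  | .sub _ _ q' => if q' = q then 1 else 0

/-- The in-degree `#in(q)` of a state of an NFA with sub-automata. -/
def SubNFA.inDeg [DecidableEq S] (A : SubNFA Sigma S) (q : S) : ℕ :=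
  (A.allTransNF.map (fun p => p.2.hits q)).sum +
  (if q ∈ A.comps.map SubNFA.q0 then 1 else 0)

/-- The maximal in-degree `#in(A)`. -/
def SubNFA.inDegMax [DecidableEq S] (A : SubNFA Sigma S) : ℕ :=
  (A.allStates.map A.inDeg).foldr max 0

/-! ## run elements for `Memo-la` and `Match-(la,at)` -/

/-- Elements of runs of `Memo-la` (and of `Match-(la,at)`): calls `C(q,i)`,
memoization-table invocations `M(q,i)`, and the results `S(i')`, `S'` (bare success),
and `F`. -/
inductive LaRunElem (S : Type) : Type where
  | call : S → ℕ → LaRunElem S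
  | memo : S → ℕ → LaRunElem S
  | succAt : ℕ → LaRunElem S
  | succ : LaRunElem S
  | fail : LaRunElem S
deriving DecidableEq

def LaRunElem.isRet : LaRunElem S → Bool
  | .succAt _ => true
  | .succ => true
  | .fail => true
  | _ => false

def LaRunElem.isCall : LaRunElem S → Bool
  | .call _ _ => true
  | .memo _ _ => true
  | _ => false

def laMemoToCall : LaRunElem S → Option (LaRunElem S)
  | .memo q i => some (.call q i)
  | _ => none

def Result.laElem {S : Type} : Result → LaRunElem S
  | .successAt i => .succAt i
  | .failure => .fail

/-! ## The backtracking matching algorithm `Match-(la,at)` -/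

/-- Big-step semantics (with produced run) of the backtracking matching algorithm
`Match-(la,at)` for NFAs with sub-automata: `LAMatchRun w A q i r s` means the call
`Match-(la,at)_{A,w}(q, i)` terminates with result `r` and produces the run `s`.
For simplicity, only the look-around kind `pla` (besides `at`) is treated. -/
inductive LAMatchRun (w : List Sigma) :
    SubNFA Sigma S → S → ℕ → Result → List (LaRunElem S) → Prop where
  | accept {A : SubNFA Sigma S} {q : S} {i : ℕ} : q ∈ A.F →
      LAMatchRun w A q i (.successAt i) [.call q i, .succAt i]
  | eps {A : SubNFA Sigma S} {q q' : S} {i : ℕ} {r : Result} {s : List (LaRunElem S)} :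
      q ∉ A.F → A.T q = SubTrans.eps q' →
      LAMatchRun w A q' i r s →
      LAMatchRun w A q i r (.call q i :: s ++ [r.laElem])
  | branchSucc {A : SubNFA Sigma S} {q q' q'' : S} {i i' : ℕ} {s : List (LaRunElem S)} :
      q ∉ A.F → A.T q = SubTrans.branch q' q'' →
      LAMatchRun w A q' i (.successAt i') s →
      LAMatchRun w A q i (.successAt i') (.call q i :: s ++ [LaRunElem.succAt i'])
  | branchFail {A : SubNFA Sigma S} {q q' q'' : S} {i : ℕ} {r : Result}
      {s s' : List (LaRunElem S)} :
      q ∉ A.F → A.T q = SubTrans.branch q' q'' →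
      LAMatchRun w A q' i .failure s →
      LAMatchRun w A q'' i r s' →
      LAMatchRun w A q i r (.call q i :: s ++ s' ++ [r.laElem])
  | charSucc {A : SubNFA Sigma S} {q q' : S} {σ : Sigma} {i : ℕ} {r : Result}
      {s : List (LaRunElem S)} :
      q ∉ A.F → A.T q = SubTrans.char σ q' →
      w[i]? = some σ →
      LAMatchRun w A q' (i + 1) r s →
      LAMatchRun w A q i r (.call q i :: s ++ [r.laElem])
  | charFail {A : SubNFA Sigma S} {q q' : S} {σ : Sigma} {i : ℕ} :
      q ∉ A.F → A.T q = SubTrans.char σ q' →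
      w[i]? ≠ some σ →
      LAMatchRun w A q i .failure [.call q i, .fail]
  | plaSucc {A A' : SubNFA Sigma S} {q q' : S} {i i' : ℕ} {r : Result}
      {s1 s2 : List (LaRunElem S)} :
      q ∉ A.F → A.T q = SubTrans.sub Kind.pla A' q' →
      LAMatchRun w A' A'.q0 i (.successAt i') s1 →
      LAMatchRun w A q' i r s2 →
      LAMatchRun w A q i r (.call q i :: s1 ++ s2 ++ [r.laElem])
  | plaFail {A A' : SubNFA Sigma S} {q q' : S} {i : ℕ} {s1 : List (LaRunElem S)} :
      q ∉ A.F → A.T q = SubTrans.sub Kind.pla A' q' →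
      LAMatchRun w A' A'.q0 i .failure s1 →
      LAMatchRun w A q i .failure (.call q i :: s1 ++ [LaRunElem.fail])
  | atSucc {A A' : SubNFA Sigma S} {q q' : S} {i i' : ℕ} {r : Result}
      {s1 s2 : List (LaRunElem S)} :
      q ∉ A.F → A.T q = SubTrans.sub Kind.at A' q' →
      LAMatchRun w A' A'.q0 i (.successAt i') s1 →
      LAMatchRun w A q' i' r s2 →
      LAMatchRun w A q i r (.call q i :: s1 ++ s2 ++ [r.laElem])
  | atFail {A A' : SubNFA Sigma S} {q q' : S} {i : ℕ} {s1 : List (LaRunElem S)} :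
      q ∉ A.F → A.T q = SubTrans.sub Kind.at A' q' →
      LAMatchRun w A' A'.q0 i .failure s1 →
      LAMatchRun w A q i .failure (.call q i :: s1 ++ [LaRunElem.fail])

/-! ## `Memo-la` -/

/-- Values of the memoization table of `Memo-la`: `Failure` or `Success`. -/
inductive LaVal : Type where
  | success : LaVal
  | failure : LaVal
deriving DecidableEq

/-- Results of `Memo-la`: `SuccessAt i'`, bare `Success`, or `Failure`. -/
inductive LaResult : Type where
  | successAt : ℕ → LaResult
  | success : LaResult
  | failure : LaResult
deriving DecidableEq

def LaVal.toResult : LaVal → LaResult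
  | .success => .success
  | .failure => .failure

def LaResult.elem {S : Type} : LaResult → LaRunElem S
  | .successAt i => .succAt i
  | .success => .succ
  | .failure => .fail

def Result.toLa : Result → LaResult
  | .successAt i => .successAt i
  | .failure => .failure

/-- The final recording of `Memo-la`: `M(q,i) := Success` if the result is
`SuccessAt i'` or `Success`, and `M(q,i) := Failure` if the result is `Failure`. -/
def laRecord [DecidableEq S] (M : S × ℕ → Option LaVal) (q : S) (i : ℕ) (r : LaResult) :
    S × ℕ → Option LaVal :=
  fun p => if p = (q, i) then
    some (match r with | .failure => LaVal.failure | _ => LaVal.success)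
  else M p

/-- Big-step semantics (with resulting memoization table and produced run) of the
memoized backtracking matching algorithm `Memo-la` for la-NFAs:
`MemoLaRun w A q i M M' r s` means the call `Memo-la^M_{A,w}(q, i)` terminates with
result `r`, final memoization table `M'`, and produces the run `s`. The memoization
table is shared between the top-level automaton and all sub-automata. -/
inductive MemoLaRun [DecidableEq S] (w : List Sigma) :
    SubNFA Sigma S → S → ℕ → (S × ℕ → Option LaVal) → (S × ℕ → Option LaVal) →
    LaResult → List (LaRunElem S) → Prop where
  | memoHit {A : SubNFA Sigma S} {q : S} {i : ℕ} {M : S × ℕ → Option LaVal} {v : LaVal} :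
      M (q, i) = some v →
      MemoLaRun w A q i M M v.toResult [.memo q i, v.toResult.elem]
  | accept {A : SubNFA Sigma S} {q : S} {i : ℕ} {M : S × ℕ → Option LaVal} :
      M (q, i) = none → q ∈ A.F →
      MemoLaRun w A q i M (laRecord M q i (.successAt i)) (.successAt i)
        [.call q i, .succAt i]
  | eps {A : SubNFA Sigma S} {q q' : S} {i : ℕ} {M M' : S × ℕ → Option LaVal}
      {r : LaResult} {s : List (LaRunElem S)} :
      M (q, i) = none → q ∉ A.F → A.T q = SubTrans.eps q' →
      MemoLaRun w A q' i M M' r s →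
      MemoLaRun w A q i M (laRecord M' q i r) r (.call q i :: s ++ [r.elem])
  | branchNoFail {A : SubNFA Sigma S} {q q' q'' : S} {i : ℕ}
      {M M' : S × ℕ → Option LaVal} {r : LaResult} {s : List (LaRunElem S)} :
      M (q, i) = none → q ∉ A.F → A.T q = SubTrans.branch q' q'' →
      MemoLaRun w A q' i M M' r s → r ≠ .failure →
      MemoLaRun w A q i M (laRecord M' q i r) r (.call q i :: s ++ [r.elem])
  | branchFail {A : SubNFA Sigma S} {q q' q'' : S} {i : ℕ}
      {M M1 M2 : S × ℕ → Option LaVal} {r : LaResult} {s1 s2 : List (LaRunElem S)} :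
      M (q, i) = none → q ∉ A.F → A.T q = SubTrans.branch q' q'' →
      MemoLaRun w A q' i M M1 .failure s1 →
      MemoLaRun w A q'' i M1 M2 r s2 →
      MemoLaRun w A q i M (laRecord M2 q i r) r (.call q i :: s1 ++ s2 ++ [r.elem])
  | charSucc {A : SubNFA Sigma S} {q q' : S} {σ : Sigma} {i : ℕ}
      {M M' : S × ℕ → Option LaVal} {r : LaResult} {s : List (LaRunElem S)} :
      M (q, i) = none → q ∉ A.F → A.T q = SubTrans.char σ q' →
      w[i]? = some σ →
      MemoLaRun w A q' (i + 1) M M' r s →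
      MemoLaRun w A q i M (laRecord M' q i r) r (.call q i :: s ++ [r.elem])
  | charFail {A : SubNFA Sigma S} {q q' : S} {σ : Sigma} {i : ℕ}
      {M : S × ℕ → Option LaVal} :
      M (q, i) = none → q ∉ A.F → A.T q = SubTrans.char σ q' →
      w[i]? ≠ some σ →
      MemoLaRun w A q i M (laRecord M q i .failure) .failure [.call q i, .fail]
  | plaSucc {A A' : SubNFA Sigma S} {q q' : S} {i : ℕ}
      {M M1 M2 : S × ℕ → Option LaVal} {r1 r : LaResult} {s1 s2 : List (LaRunElem S)} :
      M (q, i) = none → q ∉ A.F → A.T q = SubTrans.sub Kind.pla A' q' →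
      MemoLaRun w A' A'.q0 i M M1 r1 s1 → r1 ≠ .failure →
      MemoLaRun w A q' i M1 M2 r s2 →
      MemoLaRun w A q i M (laRecord M2 q i r) r (.call q i :: s1 ++ s2 ++ [r.elem])
  | plaFail {A A' : SubNFA Sigma S} {q q' : S} {i : ℕ}
      {M M1 : S × ℕ → Option LaVal} {s1 : List (LaRunElem S)} :
      M (q, i) = none → q ∉ A.F → A.T q = SubTrans.sub Kind.pla A' q' →
      MemoLaRun w A' A'.q0 i M M1 .failure s1 →
      MemoLaRun w A q i M (laRecord M1 q i .failure) .failure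
        (.call q i :: s1 ++ [LaRunElem.fail])

/-! ## `Memo-at` -/

/-- Results of `Memo-at`: `SuccessAt(i', K)` with a set `K` of delayed memoization keys,
or `Failure(j)` with a nesting depth `j`. -/
inductive AtResult (S : Type) : Type where
  | successAt : ℕ → Finset (S × ℕ) → AtResult S
  | failure : ℕ → AtResult S

/-- Elements of runs of `Memo-at`: calls `C(q,i)`, memoization-table invocations
`M(q,i)`, and results `S(i')` and `F(j)`. -/
inductive AtRunElem (S : Type) : Type where
  | call : S → ℕ → AtRunElem S
  | memo : S → ℕ → AtRunElem S
  | succ : ℕ → AtRunElem S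
  | fail : ℕ → AtRunElem S
deriving DecidableEq

def AtRunElem.isRet : AtRunElem S → Bool
  | .succ _ => true
  | .fail _ => true
  | _ => false

def AtRunElem.isCall : AtRunElem S → Bool
  | .call _ _ => true
  | .memo _ _ => true
  | _ => false

def atMemoToCall : AtRunElem S → Option (AtRunElem S)
  | .memo q i => some (.call q i)
  | _ => none

def AtResult.elem {S : Type} : AtResult S → AtRunElem S
  | .successAt i _ => .succ i
  | .failure j => .fail j

/-- `f`, converting results of `Memo-at` to results of `Match-(la,at)`. -/
def AtResult.toResult {S : Type} : AtResult S → Result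
  | .successAt i _ => .successAt i
  | .failure _ => .failure

/-- The final step of `Memo-at`: on success, the key `(q,i)` is added to the set of
delayed keys. -/
def atFinal [DecidableEq S] (q : S) (i : ℕ) : AtResult S → AtResult S
  | .successAt i' K => .successAt i' (insert (q, i) K)
  | .failure j => .failure j

/-- The final recording of `Memo-at`: `M(q,i) := Failure(j)` if the result is
`Failure(j)`. -/
def atRecord [DecidableEq S] (M : S × ℕ → Option ℕ) (q : S) (i : ℕ) :
    AtResult S → (S × ℕ → Option ℕ)
  | .failure j => fun p => if p = (q, i) then some j else M p
  | _ => M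

/-- Batch recording `M(k) := Failure(j)` for every `k ∈ K`. -/
def atBatch [DecidableEq S] (M : S × ℕ → Option ℕ) (K : Finset (S × ℕ)) (j : ℕ) :
    S × ℕ → Option ℕ :=
  fun p => if p ∈ K then some j else M p

/-- Big-step semantics (with resulting memoization table and produced run) of the
memoized backtracking matching algorithm `Memo-at` for at-NFAs:
`MemoAtRun A0 w A q i M M' r s` means the call `Memo-at^M_{A0,A,w}(q, i)` (with the
whole automaton `A0` and current sub-automaton `A`) terminates with result `r`, final
memoization table `M'`, and produces the run `s`. -/
inductive MemoAtRun [DecidableEq S] (A0 : SubNFA Sigma S) (w : List Sigma) :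
    SubNFA Sigma S → S → ℕ → (S × ℕ → Option ℕ) → (S × ℕ → Option ℕ) →
    AtResult S → List (AtRunElem S) → Prop where
  | memoHit {A : SubNFA Sigma S} {q : S} {i j : ℕ} {M : S × ℕ → Option ℕ} :
      M (q, i) = some j →
      MemoAtRun A0 w A q i M M (.failure j) [.memo q i, .fail j]
  | accept {A : SubNFA Sigma S} {q : S} {i : ℕ} {M : S × ℕ → Option ℕ} :
      M (q, i) = none → q ∈ A.F →
      MemoAtRun A0 w A q i M M (.successAt i {(q, i)}) [.call q i, .succ i]
  | eps {A : SubNFA Sigma S} {q q' : S} {i : ℕ} {M M' : S × ℕ → Option ℕ}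
      {r : AtResult S} {s : List (AtRunElem S)} :
      M (q, i) = none → q ∉ A.F → A.T q = SubTrans.eps q' →
      MemoAtRun A0 w A q' i M M' r s →
      MemoAtRun A0 w A q i M (atRecord M' q i r) (atFinal q i r)
        (.call q i :: s ++ [r.elem])
  | branchNoBT {A : SubNFA Sigma S} {q q' q'' : S} {i : ℕ} {M M' : S × ℕ → Option ℕ}
      {r : AtResult S} {s : List (AtRunElem S)} :
      M (q, i) = none → q ∉ A.F → A.T q = SubTrans.branch q' q'' →
      MemoAtRun A0 w A q' i M M' r s →
      (∀ j, r = AtResult.failure j → j ≠ A0.nu q) →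
      MemoAtRun A0 w A q i M (atRecord M' q i r) (atFinal q i r)
        (.call q i :: s ++ [r.elem])
  | branchBTSucc {A : SubNFA Sigma S} {q q' q'' : S} {i i'' : ℕ} {K : Finset (S × ℕ)}
      {M M1 M2 : S × ℕ → Option ℕ} {s1 s2 : List (AtRunElem S)} :
      M (q, i) = none → q ∉ A.F → A.T q = SubTrans.branch q' q'' →
      MemoAtRun A0 w A q' i M M1 (.failure (A0.nu q)) s1 →
      MemoAtRun A0 w A q'' i M1 M2 (.successAt i'' K) s2 →
      MemoAtRun A0 w A q i M M2 (atFinal q i (.successAt i'' K))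
        (.call q i :: s1 ++ s2 ++ [AtRunElem.succ i''])
  | branchBTFail {A : SubNFA Sigma S} {q q' q'' : S} {i j' : ℕ}
      {M M1 M2 : S × ℕ → Option ℕ} {s1 s2 : List (AtRunElem S)} :
      M (q, i) = none → q ∉ A.F → A.T q = SubTrans.branch q' q'' →
      MemoAtRun A0 w A q' i M M1 (.failure (A0.nu q)) s1 →
      MemoAtRun A0 w A q'' i M1 M2 (.failure j') s2 →
      MemoAtRun A0 w A q i M (atRecord M2 q i (.failure (min (A0.nu q) j')))
        (.failure (min (A0.nu q) j'))
        (.call q i :: s1 ++ s2 ++ [AtRunElem.fail (min (A0.nu q) j')])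
  | charSucc {A : SubNFA Sigma S} {q q' : S} {σ : Sigma} {i : ℕ}
      {M M' : S × ℕ → Option ℕ} {r : AtResult S} {s : List (AtRunElem S)} :
      M (q, i) = none → q ∉ A.F → A.T q = SubTrans.char σ q' →
      w[i]? = some σ →
      MemoAtRun A0 w A q' (i + 1) M M' r s →
      MemoAtRun A0 w A q i M (atRecord M' q i r) (atFinal q i r)
        (.call q i :: s ++ [r.elem])
  | charFail {A : SubNFA Sigma S} {q q' : S} {σ : Sigma} {i : ℕ}
      {M : S × ℕ → Option ℕ} :
      M (q, i) = none → q ∉ A.F → A.T q = SubTrans.char σ q' →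
      w[i]? ≠ some σ →
      MemoAtRun A0 w A q i M (atRecord M q i (.failure (A0.nu q)))
        (.failure (A0.nu q)) [.call q i, .fail (A0.nu q)]
  | subSuccSucc {A A' : SubNFA Sigma S} {q q' : S} {i i' i'' : ℕ}
      {K' K'' : Finset (S × ℕ)} {M M1 M2 : S × ℕ → Option ℕ}
      {s1 s2 : List (AtRunElem S)} :
      M (q, i) = none → q ∉ A.F → A.T q = SubTrans.sub Kind.at A' q' →
      MemoAtRun A0 w A' A'.q0 i M M1 (.successAt i' K') s1 →
      MemoAtRun A0 w A q' i' M1 M2 (.successAt i'' K'') s2 →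
      MemoAtRun A0 w A q i M M2 (atFinal q i (.successAt i'' (K' ∪ K'')))
        (.call q i :: s1 ++ s2 ++ [AtRunElem.succ i''])
  | subSuccFail {A A' : SubNFA Sigma S} {q q' : S} {i i' j : ℕ} {K' : Finset (S × ℕ)}
      {M M1 M2 : S × ℕ → Option ℕ} {s1 s2 : List (AtRunElem S)} :
      M (q, i) = none → q ∉ A.F → A.T q = SubTrans.sub Kind.at A' q' →
      MemoAtRun A0 w A' A'.q0 i M M1 (.successAt i' K') s1 →
      MemoAtRun A0 w A q' i' M1 M2 (.failure j) s2 →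
      MemoAtRun A0 w A q i M (atRecord (atBatch M2 K' j) q i (.failure j)) (.failure j)
        (.call q i :: s1 ++ s2 ++ [AtRunElem.fail j])
  | subFailHigh {A A' : SubNFA Sigma S} {q q' : S} {i j : ℕ}
      {M M1 : S × ℕ → Option ℕ} {s1 : List (AtRunElem S)} :
      M (q, i) = none → q ∉ A.F → A.T q = SubTrans.sub Kind.at A' q' →
      MemoAtRun A0 w A' A'.q0 i M M1 (.failure j) s1 →
      A0.nu q < j →
      MemoAtRun A0 w A q i M (atRecord M1 q i (.failure (A0.nu q)))
        (.failure (A0.nu q)) (.call q i :: s1 ++ [AtRunElem.fail (A0.nu q)])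
  | subFailLow {A A' : SubNFA Sigma S} {q q' : S} {i j : ℕ}
      {M M1 : S × ℕ → Option ℕ} {s1 : List (AtRunElem S)} :
      M (q, i) = none → q ∉ A.F → A.T q = SubTrans.sub Kind.at A' q' →
      MemoAtRun A0 w A' A'.q0 i M M1 (.failure j) s1 →
      j ≤ A0.nu q →
      MemoAtRun A0 w A q i M (atRecord M1 q i (.failure j)) (.failure j)
        (.call q i :: s1 ++ [AtRunElem.fail j])

/-! ## The combined algorithm `Memo-(la,at)` -/

/-- Values of the memoization table of `Memo-(la,at)`: `Success` or `Failure(j)`. -/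
inductive LaAtVal : Type where
  | success : LaAtVal
  | failure : ℕ → LaAtVal

/-- Results of `Memo-(la,at)`: `SuccessAt(i', K)`, bare `Success`, or `Failure(j)`. -/
inductive LaAtResult (S : Type) : Type where
  | successAt : ℕ → Finset (S × ℕ) → LaAtResult S
  | success : LaAtResult S
  | failure : ℕ → LaAtResult S

def LaAtVal.toResult {S : Type} : LaAtVal → LaAtResult S
  | .success => .success
  | .failure j => .failure j

/-- `f`, converting results of `Memo-(la,at)` to results of `Match-(la,at)`
(undefined on the bare value `Success`). -/
def LaAtResult.toResult? {S : Type} : LaAtResult S → Option Result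
  | .successAt i _ => some (.successAt i)
  | .success => none
  | .failure _ => some .failure

def laAtFinal [DecidableEq S] (q : S) (i : ℕ) : LaAtResult S → LaAtResult S
  | .successAt i' K => .successAt i' (insert (q, i) K)
  | r => r

def laAtRecord [DecidableEq S] (M : S × ℕ → Option LaAtVal) (q : S) (i : ℕ) :
    LaAtResult S → (S × ℕ → Option LaAtVal)
  | .successAt _ _ => M
  | .success => fun p => if p = (q, i) then some LaAtVal.success else M p
  | .failure j => fun p => if p = (q, i) then some (LaAtVal.failure j) else M p

def laAtBatch [DecidableEq S] (M : S × ℕ → Option LaAtVal) (K : Finset (S × ℕ))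
    (v : LaAtVal) : S × ℕ → Option LaAtVal :=
  fun p => if p ∈ K then some v else M p

/-- Big-step semantics (with resulting memoization table and the number of recursive
calls made) of the combined memoized backtracking matching algorithm `Memo-(la,at)`:
`MemoLaAtRun w A0 A q i M M' r n` means the call `Memo-(la,at)^M_{A0,A,w}(q, i)`
terminates with result `r`, final memoization table `M'`, making `n` calls in total.
On a positive look-ahead transition, the sub-automaton becomes the new whole automaton
(so nesting depths of atomic grouping are reset by look-around operators). -/
inductive MemoLaAtRun [DecidableEq S] (w : List Sigma) :
    SubNFA Sigma S → SubNFA Sigma S → S → ℕ →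
    (S × ℕ → Option LaAtVal) → (S × ℕ → Option LaAtVal) → LaAtResult S → ℕ → Prop where
  | memoHit {A0 A : SubNFA Sigma S} {q : S} {i : ℕ} {M : S × ℕ → Option LaAtVal}
      {v : LaAtVal} :
      M (q, i) = some v →
      MemoLaAtRun w A0 A q i M M v.toResult 1
  | accept {A0 A : SubNFA Sigma S} {q : S} {i : ℕ} {M : S × ℕ → Option LaAtVal} :
      M (q, i) = none → q ∈ A.F →
      MemoLaAtRun w A0 A q i M M (.successAt i {(q, i)}) 1
  | eps {A0 A : SubNFA Sigma S} {q q' : S} {i : ℕ} {M M' : S × ℕ → Option LaAtVal}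
      {r : LaAtResult S} {n : ℕ} :
      M (q, i) = none → q ∉ A.F → A.T q = SubTrans.eps q' →
      MemoLaAtRun w A0 A q' i M M' r n →
      MemoLaAtRun w A0 A q i M (laAtRecord M' q i (laAtFinal q i r)) (laAtFinal q i r)
        (n + 1)
  | branchNoBT {A0 A : SubNFA Sigma S} {q q' q'' : S} {i : ℕ}
      {M M' : S × ℕ → Option LaAtVal} {r : LaAtResult S} {n : ℕ} :
      M (q, i) = none → q ∉ A.F → A.T q = SubTrans.branch q' q'' →
      MemoLaAtRun w A0 A q' i M M' r n →
      (∀ j, r = LaAtResult.failure j → j ≠ A0.nu q) →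
      MemoLaAtRun w A0 A q i M (laAtRecord M' q i (laAtFinal q i r)) (laAtFinal q i r)
        (n + 1)
  | branchBTFail {A0 A : SubNFA Sigma S} {q q' q'' : S} {i j' : ℕ}
      {M M1 M2 : S × ℕ → Option LaAtVal} {n1 n2 : ℕ} :
      M (q, i) = none → q ∉ A.F → A.T q = SubTrans.branch q' q'' →
      MemoLaAtRun w A0 A q' i M M1 (.failure (A0.nu q)) n1 →
      MemoLaAtRun w A0 A q'' i M1 M2 (.failure j') n2 →
      MemoLaAtRun w A0 A q i M
        (laAtRecord M2 q i (.failure (min (A0.nu q) j')))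
        (.failure (min (A0.nu q) j')) (n1 + n2 + 1)
  | branchBTOther {A0 A : SubNFA Sigma S} {q q' q'' : S} {i : ℕ}
      {M M1 M2 : S × ℕ → Option LaAtVal} {r : LaAtResult S} {n1 n2 : ℕ} :
      M (q, i) = none → q ∉ A.F → A.T q = SubTrans.branch q' q'' →
      MemoLaAtRun w A0 A q' i M M1 (.failure (A0.nu q)) n1 →
      MemoLaAtRun w A0 A q'' i M1 M2 r n2 →
      (∀ j, r ≠ LaAtResult.failure j) →
      MemoLaAtRun w A0 A q i M (laAtRecord M2 q i (laAtFinal q i r)) (laAtFinal q i r)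
        (n1 + n2 + 1)
  | charSucc {A0 A : SubNFA Sigma S} {q q' : S} {σ : Sigma} {i : ℕ}
      {M M' : S × ℕ → Option LaAtVal} {r : LaAtResult S} {n : ℕ} :
      M (q, i) = none → q ∉ A.F → A.T q = SubTrans.char σ q' →
      w[i]? = some σ →
      MemoLaAtRun w A0 A q' (i + 1) M M' r n →
      MemoLaAtRun w A0 A q i M (laAtRecord M' q i (laAtFinal q i r)) (laAtFinal q i r)
        (n + 1)
  | charFail {A0 A : SubNFA Sigma S} {q q' : S} {σ : Sigma} {i : ℕ}
      {M : S × ℕ → Option LaAtVal} :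
      M (q, i) = none → q ∉ A.F → A.T q = SubTrans.char σ q' →
      w[i]? ≠ some σ →
      MemoLaAtRun w A0 A q i M (laAtRecord M q i (.failure (A0.nu q)))
        (.failure (A0.nu q)) 1
  | plaSuccAt {A0 A A' : SubNFA Sigma S} {q q' : S} {i i' : ℕ} {K' : Finset (S × ℕ)}
      {M M1 M2 : S × ℕ → Option LaAtVal} {r : LaAtResult S} {n1 n2 : ℕ} :
      M (q, i) = none → q ∉ A.F → A.T q = SubTrans.sub Kind.pla A' q' →
      MemoLaAtRun w A' A' A'.q0 i M M1 (.successAt i' K') n1 →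
      MemoLaAtRun w A0 A q' i (laAtBatch M1 K' LaAtVal.success) M2 r n2 →
      MemoLaAtRun w A0 A q i M (laAtRecord M2 q i (laAtFinal q i r)) (laAtFinal q i r)
        (n1 + n2 + 1)
  | plaBare {A0 A A' : SubNFA Sigma S} {q q' : S} {i : ℕ}
      {M M1 M2 : S × ℕ → Option LaAtVal} {r : LaAtResult S} {n1 n2 : ℕ} :
      M (q, i) = none → q ∉ A.F → A.T q = SubTrans.sub Kind.pla A' q' →
      MemoLaAtRun w A' A' A'.q0 i M M1 .success n1 →
      MemoLaAtRun w A0 A q' i M1 M2 r n2 →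
      MemoLaAtRun w A0 A q i M (laAtRecord M2 q i (laAtFinal q i r)) (laAtFinal q i r)
        (n1 + n2 + 1)
  | plaFail {A0 A A' : SubNFA Sigma S} {q q' : S} {i j : ℕ}
      {M M1 : S × ℕ → Option LaAtVal} {n1 : ℕ} :
      M (q, i) = none → q ∉ A.F → A.T q = SubTrans.sub Kind.pla A' q' →
      MemoLaAtRun w A' A' A'.q0 i M M1 (.failure j) n1 →
      MemoLaAtRun w A0 A q i M (laAtRecord M1 q i (.failure (A0.nu q)))
        (.failure (A0.nu q)) (n1 + 1)
  | atSuccSucc {A0 A A' : SubNFA Sigma S} {q q' : S} {i i' i'' : ℕ}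
      {K' K'' : Finset (S × ℕ)} {M M1 M2 : S × ℕ → Option LaAtVal} {n1 n2 : ℕ} :
      M (q, i) = none → q ∉ A.F → A.T q = SubTrans.sub Kind.at A' q' →
      MemoLaAtRun w A0 A' A'.q0 i M M1 (.successAt i' K') n1 →
      MemoLaAtRun w A0 A q' i' M1 M2 (.successAt i'' K'') n2 →
      MemoLaAtRun w A0 A q i M M2
        (laAtFinal q i (.successAt i'' (K' ∪ K''))) (n1 + n2 + 1)
  | atSuccBare {A0 A A' : SubNFA Sigma S} {q q' : S} {i i' : ℕ} {K' : Finset (S × ℕ)}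
      {M M1 M2 : S × ℕ → Option LaAtVal} {n1 n2 : ℕ} :
      M (q, i) = none → q ∉ A.F → A.T q = SubTrans.sub Kind.at A' q' →
      MemoLaAtRun w A0 A' A'.q0 i M M1 (.successAt i' K') n1 →
      MemoLaAtRun w A0 A q' i' M1 M2 .success n2 →
      MemoLaAtRun w A0 A q i M
        (laAtRecord (laAtBatch M2 K' LaAtVal.success) q i .success) .success
        (n1 + n2 + 1)
  | atSuccFail {A0 A A' : SubNFA Sigma S} {q q' : S} {i i' j : ℕ} {K' : Finset (S × ℕ)}
      {M M1 M2 : S × ℕ → Option LaAtVal} {n1 n2 : ℕ} :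
      M (q, i) = none → q ∉ A.F → A.T q = SubTrans.sub Kind.at A' q' →
      MemoLaAtRun w A0 A' A'.q0 i M M1 (.successAt i' K') n1 →
      MemoLaAtRun w A0 A q' i' M1 M2 (.failure j) n2 →
      MemoLaAtRun w A0 A q i M
        (laAtRecord (laAtBatch M2 K' (LaAtVal.failure j)) q i (.failure j))
        (.failure j) (n1 + n2 + 1)
  | atBare {A0 A A' : SubNFA Sigma S} {q q' : S} {i : ℕ}
      {M M1 : S × ℕ → Option LaAtVal} {n1 : ℕ} :
      M (q, i) = none → q ∉ A.F → A.T q = SubTrans.sub Kind.at A' q' →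
      MemoLaAtRun w A0 A' A'.q0 i M M1 .success n1 →
      MemoLaAtRun w A0 A q i M (laAtRecord M1 q i .success) .success (n1 + 1)
  | atFailHigh {A0 A A' : SubNFA Sigma S} {q q' : S} {i j : ℕ}
      {M M1 : S × ℕ → Option LaAtVal} {n1 : ℕ} :
      M (q, i) = none → q ∉ A.F → A.T q = SubTrans.sub Kind.at A' q' →
      MemoLaAtRun w A0 A' A'.q0 i M M1 (.failure j) n1 →
      A0.nu q < j →
      MemoLaAtRun w A0 A q i M (laAtRecord M1 q i (.failure (A0.nu q)))
        (.failure (A0.nu q)) (n1 + 1)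
  | atFailLow {A0 A A' : SubNFA Sigma S} {q q' : S} {i j : ℕ}
      {M M1 : S × ℕ → Option LaAtVal} {n1 : ℕ} :
      M (q, i) = none → q ∉ A.F → A.T q = SubTrans.sub Kind.at A' q' →
      MemoLaAtRun w A0 A' A'.q0 i M M1 (.failure j) n1 →
      j ≤ A0.nu q →
      MemoLaAtRun w A0 A q i M (laAtRecord M1 q i (.failure j)) (.failure j) (n1 + 1)


/-!
A call `(q, i)` that misses the table records its own pair, and by acyclicity of the calls it does
so for the first time: every pair recorded by its recursive calls has a strictly smaller rank in a
well-founded order. So each pair `(q, i)` pays at most once for the calls leaving `q`, and the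
number of calls is at most `1` plus `|w| + 1` times the number of calls leaving the states of `A`.
Each such call either follows an edge to a successor state or enters the initial state of a
sub-automaton; since the automata occurring in `A` form a tree, the latter are fewer than the
initial states counted in the in-degrees, and the slack pays for the initial call.
-/

theorem sum_list_sum_comm {ι κ M : Type*} [AddCommMonoid M] (s : Finset ι) (l : List κ)
    (f : ι → κ → M) :
    ∑ a ∈ s, (l.map (f a)).sum = (l.map fun b => ∑ a ∈ s, f a b).sum := by
  simpa using Multiset.sum_map_sum_map s.val (l : Multiset κ) (f := f)

theorem sum_map_flatMap {ι κ M : Type*} [AddMonoid M] (l : List ι) (f : ι → List κ)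
    (g : κ → M) : ((l.flatMap f).map g).sum = (l.map fun a => ((f a).map g).sum).sum := by
  induction l with
  | nil => rfl
  | cons a l ih => simp [ih]

/-! ### Components of an automaton -/

/-- The targets of the edges of a transition inside its own automaton. -/
def SubTrans.succs : SubTrans Sigma S → List S
  | .eps p => [p]
  | .branch p₁ p₂ => [p₁, p₂]
  | .char _ p => [p]
  | .sub _ _ p => [p]

/-- The automaton labelling a transition, as a list with at most one element. -/
def SubTrans.subAutomata : SubTrans Sigma S → List (SubNFA Sigma S)
  | .sub _ A' _ => [A']
  | _ => []

theorem SubTrans.mem_subAutomata {t : SubTrans Sigma S} {A' : SubNFA Sigma S} :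
    A' ∈ t.subAutomata ↔ ∃ k q', t = .sub k A' q' := by
  cases t <;> simp [subAutomata, eq_comm]

theorem SubNFA.subInduction {motive : SubNFA Sigma S → Prop}
    (step : ∀ A, (∀ q, ∀ A' ∈ (A.T q).subAutomata, motive A') → motive A) (A : SubNFA Sigma S) :
    motive A :=
  SubNFA.rec (motive_1 := motive) (motive_2 := fun t => ∀ A' ∈ t.subAutomata, motive A')
    (fun Q q0 F T ih => step (.mk Q q0 F T) ih)
    (by simp [SubTrans.subAutomata]) (by simp [SubTrans.subAutomata])
    (by simp [SubTrans.subAutomata]) (by simp [SubTrans.subAutomata]) A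

theorem SubNFA.comps_eq_cons (A : SubNFA Sigma S) :
    A.comps = A :: A.Q.flatMap fun q => (A.T q).subAutomata.flatMap comps := by
  obtain ⟨Q, q0, F, T⟩ := A
  simp only [comps, compsD, SubNFA.Q, SubNFA.T, List.map_cons, List.map_flatMap]
  congr 2
  funext q
  cases T q <;> simp [SubTrans.subCompsD, SubTrans.subAutomata, comps]

theorem SubNFA.mem_comps_iff {A B : SubNFA Sigma S} :
    B ∈ A.comps ↔ B = A ∨ ∃ q ∈ A.Q, ∃ A' ∈ (A.T q).subAutomata, B ∈ A'.comps := by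
  rw [comps_eq_cons]
  simp

theorem SubNFA.self_mem_comps (A : SubNFA Sigma S) : A ∈ A.comps :=
  mem_comps_iff.2 (.inl rfl)

theorem SubNFA.mem_comps_of_mem_subAutomata {A B A' : SubNFA Sigma S} {q : S} (hB : B ∈ A.comps)
    (hq : q ∈ B.Q) (hA' : A' ∈ (B.T q).subAutomata) : A' ∈ A.comps := by
  induction A using subInduction with
  | step A ih =>
    rcases mem_comps_iff.1 hB with rfl | ⟨p, hp, C, hC, hBC⟩
    · exact mem_comps_iff.2 (.inr ⟨q, hq, A', hA', A'.self_mem_comps⟩)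
    · exact mem_comps_iff.2 (.inr ⟨p, hp, C, hC, ih p C hC hBC⟩)

/-- A tree has one more node than edges; here the edges are the transitions labelled with
a sub-automaton. -/
theorem SubNFA.length_comps (A : SubNFA Sigma S) :
    A.comps.length =
      1 + (A.comps.map fun B => (B.Q.map fun q => (B.T q).subAutomata.length).sum).sum := by
  induction A using subInduction with
  | step A ih =>
    have hsub : ∀ q, ((A.T q).subAutomata.flatMap comps).length = (A.T q).subAutomata.length +
        (((A.T q).subAutomata.flatMap comps).map
          fun B => (B.Q.map fun p => (B.T p).subAutomata.length).sum).sum := by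
      intro q
      rw [List.length_flatMap, List.map_congr_left (ih q), List.sum_map_add,
        sum_map_flatMap]
      simp
    rw [comps_eq_cons, List.length_cons, List.length_flatMap, List.map_cons, List.sum_cons,
      sum_map_flatMap]
    simp only [hsub, List.sum_map_add]
    ring

theorem SubNFA.length_comps_lt {A A' : SubNFA Sigma S} {q : S} (hq : q ∈ A.Q)
    (hA' : A' ∈ (A.T q).subAutomata) : A'.comps.length < A.comps.length := by
  have hle : A'.comps.length ≤
      (A.Q.flatMap fun q => (A.T q).subAutomata.flatMap comps).length := by
    rw [List.length_flatMap]
    refine le_trans ?_ (List.le_sum_of_mem (List.mem_map_of_mem hq))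
    rw [List.length_flatMap]
    exact List.le_sum_of_mem (List.mem_map_of_mem hA')
  rw [A.comps_eq_cons, List.length_cons]
  exact Nat.lt_succ_of_le hle

theorem SubNFA.mem_allStates {A B : SubNFA Sigma S} {q : S} (hB : B ∈ A.comps) (hq : q ∈ B.Q) :
    q ∈ A.allStates :=
  List.mem_flatMap.2 ⟨B, hB, hq⟩

theorem SubNFA.LocalOK.mem_of_mem_succs {B : SubNFA Sigma S} (hB : B.LocalOK) {q q' : S}
    (hq : q ∈ B.Q) (hF : q ∉ B.F) (hq' : q' ∈ (B.T q).succs) : q' ∈ B.Q := by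
  have hT := hB.2.2 q hq hF
  cases h : B.T q with
  | eps | char | sub =>
    rw [h] at hT hq'
    exact List.mem_singleton.1 hq' ▸ hT
  | branch =>
    rw [h] at hT hq'
    rcases List.mem_pair.1 hq' with rfl | rfl
    exacts [hT.1, hT.2]

theorem SubNFA.WF.pairwise_disjoint {A : SubNFA Sigma S} (hA : A.WF) :
    A.comps.Pairwise (Function.onFun List.Disjoint (Q : SubNFA Sigma S → List S)) :=
  (List.nodup_flatMap.1 hA.2).2

theorem SubNFA.WF.eq_of_mem {A B C : SubNFA Sigma S} (hA : A.WF) {q : S} (hB : B ∈ A.comps)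
    (hC : C ∈ A.comps) (hqB : q ∈ B.Q) (hqC : q ∈ C.Q) : B = C := by
  by_contra hne
  have : Std.Symm (Function.onFun List.Disjoint (Q : SubNFA Sigma S → List S)) :=
    ⟨fun _ _ => List.Disjoint.symm⟩
  exact hA.pairwise_disjoint.forall hB hC hne hqB hqC

theorem SubNFA.WF.nodup_map_q0 {A : SubNFA Sigma S} (hA : A.WF) : (A.comps.map q0).Nodup :=
  List.pairwise_map.2 <| hA.pairwise_disjoint.imp_of_mem fun hB hC hBC h =>
    hBC (hA.1 _ hB).1 (h ▸ (hA.1 _ hC).1)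

theorem SubNFA.IsLaNFA.eq_pla [DecidableEq S] {A B A' : SubNFA Sigma S} (hA : A.IsLaNFA)
    {q q' : S} {k : Kind} (hB : B ∈ A.comps) (hq : q ∈ B.Q) (hF : q ∉ B.F)
    (hT : B.T q = .sub k A' q') : k = .pla :=
  hA k <| List.mem_flatMap.2 ⟨B, hB, List.mem_filterMap.2 ⟨q, by simp [hq, hF], by simp [hT]⟩⟩

/-! ### Out-degrees -/

/-- The maximal number of recursive calls made directly by a call that takes the transition. -/
def SubTrans.arity (t : SubTrans Sigma S) : ℕ :=
  t.succs.length + t.subAutomata.length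

theorem SubTrans.hits_eq_count [DecidableEq S] (t : SubTrans Sigma S) (q : S) :
    t.hits q = t.succs.count q := by
  cases t <;> simp [hits, succs, List.count_cons, add_comm]

theorem SubNFA.mem_allTransNF [DecidableEq S] {A : SubNFA Sigma S} {p : S × SubTrans Sigma S} :
    p ∈ A.allTransNF ↔ ∃ B ∈ A.comps, p.1 ∈ B.Q ∧ p.1 ∉ B.F ∧ p.2 = B.T p.1 := by
  obtain ⟨q, t⟩ := p
  simp only [allTransNF, List.mem_flatMap, List.mem_map, List.mem_filter, decide_eq_true_eq,
    Prod.mk.injEq]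
  constructor
  · rintro ⟨B, hB, q, ⟨hq, hF⟩, rfl, rfl⟩
    exact ⟨B, hB, hq, hF, rfl⟩
  · rintro ⟨B, hB, hq, hF, rfl⟩
    exact ⟨B, hB, q, ⟨hq, hF⟩, rfl, rfl⟩

/-- The out-degree of a state, the counterpart of `SubNFA.inDeg`: the maximal number of recursive
calls made directly by a call at `q`. -/
def SubNFA.outDeg [DecidableEq S] (A : SubNFA Sigma S) (q : S) : ℕ :=
  (A.allTransNF.map fun p => if p.1 = q then p.2.arity else 0).sum

theorem SubNFA.arity_le_outDeg [DecidableEq S] {A B : SubNFA Sigma S} {q : S} (hB : B ∈ A.comps)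
    (hq : q ∈ B.Q) (hF : q ∉ B.F) : (B.T q).arity ≤ A.outDeg q :=
  List.le_sum_of_mem <| List.mem_map.2
    ⟨(q, B.T q), mem_allTransNF.2 ⟨B, hB, hq, hF, rfl⟩, if_pos rfl⟩

theorem SubNFA.sum_outDeg [DecidableEq S] (A : SubNFA Sigma S) :
    ∑ q ∈ A.allStates.toFinset, A.outDeg q = (A.allTransNF.map fun p => p.2.arity).sum := by
  simp only [outDeg]
  rw [sum_list_sum_comm]
  refine congrArg List.sum (List.map_congr_left fun p hp => ?_)
  obtain ⟨B, hB, hq, -⟩ := mem_allTransNF.1 hp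
  simp [mem_allStates hB hq]

theorem SubNFA.WF.sum_hits [DecidableEq S] {A : SubNFA Sigma S} (hA : A.WF)
    {p : S × SubTrans Sigma S} (hp : p ∈ A.allTransNF) :
    ∑ q ∈ A.allStates.toFinset, p.2.hits q = p.2.succs.length := by
  obtain ⟨B, hB, hq, hF, hT⟩ := mem_allTransNF.1 hp
  have hsuccs : ∀ q' ∈ (p.2.succs : Multiset S), q' ∈ A.allStates.toFinset := fun q' hq' =>
    List.mem_toFinset.2 <| mem_allStates hB <|
      (hA.1 B hB).mem_of_mem_succs hq hF (hT ▸ Multiset.mem_coe.1 hq')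
  simpa [SubTrans.hits_eq_count] using Multiset.sum_count_eq_card hsuccs

theorem SubNFA.WF.card_filter_mem_map_q0 [DecidableEq S] {A : SubNFA Sigma S} (hA : A.WF) :
    (A.allStates.toFinset.filter (· ∈ A.comps.map q0)).card = A.comps.length := by
  have hfilter : A.allStates.toFinset.filter (· ∈ A.comps.map q0) = (A.comps.map q0).toFinset := by
    ext q
    simp only [Finset.mem_filter, List.mem_toFinset, and_iff_right_iff_imp]
    intro hq
    obtain ⟨B, hB, rfl⟩ := List.mem_map.1 hq
    exact mem_allStates hB (hA.1 B hB).1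
  rw [hfilter, List.toFinset_card_of_nodup hA.nodup_map_q0, List.length_map]

theorem SubNFA.WF.sum_inDeg [DecidableEq S] {A : SubNFA Sigma S} (hA : A.WF) :
    ∑ q ∈ A.allStates.toFinset, A.inDeg q =
      (A.allTransNF.map fun p => p.2.succs.length).sum + A.comps.length := by
  simp only [inDeg]
  rw [Finset.sum_add_distrib, sum_list_sum_comm, ← Finset.card_filter, hA.card_filter_mem_map_q0,
    List.map_congr_left fun p hp => hA.sum_hits hp]

theorem SubNFA.sum_subAutomata_lt [DecidableEq S] (A : SubNFA Sigma S) :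
    (A.allTransNF.map fun p => p.2.subAutomata.length).sum < A.comps.length := by
  rw [allTransNF, sum_map_flatMap, length_comps, Nat.lt_one_add_iff]
  refine List.sum_le_sum fun B _ => ?_
  rw [List.map_map]
  exact (List.filter_sublist.map _).sum_le_sum fun _ _ => Nat.zero_le _

theorem SubNFA.WF.sum_outDeg_lt_sum_inDeg [DecidableEq S] {A : SubNFA Sigma S} (hA : A.WF) :
    ∑ q ∈ A.allStates.toFinset, A.outDeg q < ∑ q ∈ A.allStates.toFinset, A.inDeg q := by
  rw [sum_outDeg, hA.sum_inDeg]
  simp only [SubTrans.arity, List.sum_map_add]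
  exact Nat.add_lt_add_left A.sum_subAutomata_lt _

theorem SubNFA.sum_inDeg_le [DecidableEq S] (A : SubNFA Sigma S) :
    ∑ q ∈ A.allStates.toFinset, A.inDeg q ≤ A.inDegMax * A.allStates.length := by
  have hmax : ∀ q ∈ A.allStates.toFinset, A.inDeg q ≤ A.inDegMax := fun q hq =>
    List.le_max_of_le' 0 (List.mem_map_of_mem (List.mem_toFinset.1 hq)) le_rfl
  calc ∑ q ∈ A.allStates.toFinset, A.inDeg q
      ≤ A.allStates.toFinset.card * A.inDegMax := Finset.sum_le_card_nsmul _ _ _ hmax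
    _ ≤ A.allStates.length * A.inDegMax := Nat.mul_le_mul_right _ (List.toFinset_card_le _)
    _ = A.inDegMax * A.allStates.length := mul_comm _ _

/-! ### The call relation and its rank -/

/-- The arguments `B, q, i` of a call that can occur in a run of `A` on `w`. -/
structure SubNFA.IsConfig (A : SubNFA Sigma S) (w : List Sigma) (B : SubNFA Sigma S) (q : S)
    (i : ℕ) : Prop where
  mem_comps : B ∈ A.comps
  mem_Q : q ∈ B.Q
  le_length : i ≤ w.length

/-- `Calls w B q i C q' i'`: computing `Memo-la_{B,w}(q, i)` may directly involve the recursive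
call `Memo-la_{C,w}(q', i')`, whatever the memoization table is. -/
inductive Calls (w : List Sigma) :
    SubNFA Sigma S → S → ℕ → SubNFA Sigma S → S → ℕ → Prop where
  | eps {B : SubNFA Sigma S} {q q' : S} {i : ℕ} :
      q ∉ B.F → B.T q = .eps q' → Calls w B q i B q' i
  | branchLeft {B : SubNFA Sigma S} {q q' q'' : S} {i : ℕ} :
      q ∉ B.F → B.T q = .branch q' q'' → Calls w B q i B q' i
  | branchRight {B : SubNFA Sigma S} {q q' q'' : S} {i : ℕ} :
      q ∉ B.F → B.T q = .branch q' q'' → Calls w B q i B q'' i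
  | char {B : SubNFA Sigma S} {q q' : S} {σ : Sigma} {i : ℕ} :
      q ∉ B.F → B.T q = .char σ q' → w[i]? = some σ → Calls w B q i B q' (i + 1)
  | plaStart {B A' : SubNFA Sigma S} {q q' : S} {i : ℕ} :
      q ∉ B.F → B.T q = .sub .pla A' q' → Calls w B q i A' A'.q0 i
  | plaNext {B A' : SubNFA Sigma S} {q q' : S} {i : ℕ} :
      q ∉ B.F → B.T q = .sub .pla A' q' → Calls w B q i B q' i

theorem Calls.isConfig {A B C : SubNFA Sigma S} {w : List Sigma} {q q' : S} {i i' : ℕ}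
    (hc : Calls w B q i C q' i') (hA : A.WF) (h : A.IsConfig w B q i) :
    A.IsConfig w C q' i' := by
  obtain ⟨hB, hq, hi⟩ := h
  have hsucc {p : S} (hF : q ∉ B.F) (hp : p ∈ (B.T q).succs) : p ∈ B.Q :=
    (hA.1 B hB).mem_of_mem_succs hq hF hp
  cases hc with
  | eps hF hT | branchLeft hF hT | branchRight hF hT | plaNext hF hT =>
    exact ⟨hB, hsucc hF (by simp [hT, SubTrans.succs]), hi⟩
  | char hF hT hσ =>
    exact ⟨hB, hsucc hF (by simp [hT, SubTrans.succs]), (List.getElem?_eq_some_iff.1 hσ).1⟩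
  | plaStart hF hT =>
    have hC : C ∈ A.comps :=
      SubNFA.mem_comps_of_mem_subAutomata hB hq (SubTrans.mem_subAutomata.2 ⟨_, _, hT⟩)
    exact ⟨hC, (hA.1 C hC).1, hi⟩

open Classical in
/-- The number of states reachable from `q` by a nonempty sequence of ε-steps, which decreases
along ε-steps if there are no ε-loops. -/
noncomputable def SubNFA.epsRank (A : SubNFA Sigma S) (q : S) : ℕ :=
  (A.allStates.toFinset.filter (Relation.TransGen A.epsStep q)).card

theorem SubNFA.NoEpsLoops.epsRank_lt {A : SubNFA Sigma S} (hA : A.NoEpsLoops) {q q' : S}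
    (h : A.epsStep q q') (hq' : q' ∈ A.allStates) : A.epsRank q' < A.epsRank q := by
  classical
  refine Finset.card_lt_card <| (Finset.ssubset_iff_of_subset ?_).2 ⟨q', ?_, ?_⟩
  · exact Finset.monotone_filter_right _ fun _ _ hp => .head h hp
  · simpa [hq'] using Relation.TransGen.single h
  · simpa using fun _ => hA _

/-- The automaton occurring in `A` that has `q` as a top-level state, if there is one. -/
def SubNFA.owner [DecidableEq S] (A : SubNFA Sigma S) (q : S) : Option (SubNFA Sigma S) :=
  A.comps.find? (q ∈ ·.Q)

theorem SubNFA.WF.owner_eq [DecidableEq S] {A B : SubNFA Sigma S} (hA : A.WF) {q : S}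
    (hB : B ∈ A.comps) (hq : q ∈ B.Q) : A.owner q = some B := by
  have hsome : (A.owner q).isSome := List.find?_isSome.2 ⟨B, hB, by simpa using hq⟩
  obtain ⟨C, hC⟩ := Option.isSome_iff_exists.1 hsome
  have hqC : q ∈ C.Q := by simpa using List.find?_some hC
  rw [hC, hA.eq_of_mem (List.mem_of_find?_eq_some hC) hB hqC hq]

/-- A rank of the pairs `(q, i)` that decreases along calls: entering a sub-automaton decreases
the number of automata nested in the current one, reading a character decreases the length of the
remaining input, and all other calls are ε-steps. -/
noncomputable def SubNFA.callRank [DecidableEq S] (A : SubNFA Sigma S) (w : List Sigma)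
    (p : S × ℕ) : ℕ ×ₗ ℕ ×ₗ ℕ :=
  toLex ((A.owner p.1).elim 0 (·.comps.length), toLex (w.length - p.2, A.epsRank p.1))

theorem Calls.callRank_lt [DecidableEq S] {A B C : SubNFA Sigma S} {w : List Sigma} {q q' : S}
    {i i' : ℕ} (hc : Calls w B q i C q' i') (hA : A.WF) (hLoop : A.NoEpsLoops)
    (h : A.IsConfig w B q i) : A.callRank w (q', i') < A.callRank w (q, i) := by
  have h' := hc.isConfig hA h
  have heps (hs : A.epsStep q q') : A.epsRank q' < A.epsRank q :=
    hLoop.epsRank_lt hs (SubNFA.mem_allStates h'.mem_comps h'.mem_Q)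
  simp only [SubNFA.callRank, hA.owner_eq h.mem_comps h.mem_Q, hA.owner_eq h'.mem_comps h'.mem_Q,
    Option.elim_some, Prod.Lex.toLex_lt_toLex]
  cases hc with
  | eps hF hT => exact .inr ⟨rfl, .inr ⟨rfl, heps ⟨B, h.1, h.2, hF, .inl hT⟩⟩⟩
  | branchLeft hF hT =>
    exact .inr ⟨rfl, .inr ⟨rfl, heps ⟨B, h.1, h.2, hF, .inr (.inl ⟨_, hT⟩)⟩⟩⟩
  | branchRight hF hT =>
    exact .inr ⟨rfl, .inr ⟨rfl, heps ⟨B, h.1, h.2, hF, .inr (.inr (.inl ⟨_, hT⟩))⟩⟩⟩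
  | plaNext hF hT =>
    exact .inr ⟨rfl, .inr ⟨rfl, heps ⟨B, h.1, h.2, hF, .inr (.inr (.inr ⟨_, _, hT, nofun⟩))⟩⟩⟩
  | char =>
    have hi := h'.le_length
    exact .inr ⟨rfl, .inl (by omega)⟩
  | plaStart hF hT =>
    exact .inl (SubNFA.length_comps_lt h.mem_Q (SubTrans.mem_subAutomata.2 ⟨_, _, hT⟩))

/-! ### Termination -/

theorem exists_memoLaRun_of_calls [DecidableEq S] {w : List Sigma} {B : SubNFA Sigma S} {q : S}
    {i : ℕ} (hpla : ∀ k A' q', q ∉ B.F → B.T q = .sub k A' q' → k = .pla)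
    (hcalls : ∀ {C q' i'}, Calls w B q i C q' i' → ∀ M, ∃ M' r s, MemoLaRun w C q' i' M M' r s)
    (M : S × ℕ → Option LaVal) : ∃ M' r s, MemoLaRun w B q i M M' r s := by
  cases hM : M (q, i) with
  | some v => exact ⟨_, _, _, .memoHit hM⟩
  | none =>
  by_cases hF : q ∈ B.F
  · exact ⟨_, _, _, .accept hM hF⟩
  cases hT : B.T q with
  | eps q' =>
    obtain ⟨_, _, _, hrun⟩ := hcalls (.eps hF hT) M
    exact ⟨_, _, _, .eps hM hF hT hrun⟩
  | branch q' q'' =>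
    obtain ⟨M₁, r₁, _, hrun₁⟩ := hcalls (.branchLeft hF hT) M
    by_cases hr₁ : r₁ = .failure
    · obtain ⟨_, _, _, hrun₂⟩ := hcalls (.branchRight hF hT) M₁
      exact ⟨_, _, _, .branchFail hM hF hT (hr₁ ▸ hrun₁) hrun₂⟩
    · exact ⟨_, _, _, .branchNoFail hM hF hT hrun₁ hr₁⟩
  | char σ q' =>
    by_cases hσ : w[i]? = some σ
    · obtain ⟨_, _, _, hrun⟩ := hcalls (.char hF hT hσ) M
      exact ⟨_, _, _, .charSucc hM hF hT hσ hrun⟩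
    · exact ⟨_, _, _, .charFail hM hF hT hσ⟩
  | sub k A' q' =>
    obtain rfl := hpla k A' q' hF hT
    obtain ⟨M₁, r₁, _, hrun₁⟩ := hcalls (.plaStart hF hT) M
    by_cases hr₁ : r₁ = .failure
    · exact ⟨_, _, _, .plaFail hM hF hT (hr₁ ▸ hrun₁)⟩
    · obtain ⟨_, _, _, hrun₂⟩ := hcalls (.plaNext hF hT) M₁
      exact ⟨_, _, _, .plaSucc hM hF hT hrun₁ hr₁ hrun₂⟩

theorem SubNFA.IsConfig.exists_memoLaRun [DecidableEq S] {A B : SubNFA Sigma S} {w : List Sigma}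
    {q : S} {i : ℕ} (h : A.IsConfig w B q i) (hA : A.WF) (hLa : A.IsLaNFA)
    (hLoop : A.NoEpsLoops) (M : S × ℕ → Option LaVal) : ∃ M' r s, MemoLaRun w B q i M M' r s := by
  induction hρ : A.callRank w (q, i) using WellFoundedLT.induction generalizing B q i M with
  | ind ρ ih =>
    subst hρ
    exact exists_memoLaRun_of_calls (fun _ _ _ => hLa.eq_pla h.mem_comps h.mem_Q)
      (fun hc M => ih _ (hc.callRank_lt hA hLoop h) (hc.isConfig hA h) M rfl) M

/-! ### Amortized number of calls -/

theorem isSome_laRecord [DecidableEq S] {M : S × ℕ → Option LaVal} {q : S} {i : ℕ}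
    {r : LaResult} {p : S × ℕ} :
    (laRecord M q i r p).isSome ↔ p = (q, i) ∨ (M p).isSome := by
  by_cases hp : p = (q, i) <;> simp [laRecord, hp]

/-- The potential of a memoization table: the out-degrees of the recorded pairs. -/
def SubNFA.tablePotential [DecidableEq S] (A : SubNFA Sigma S) (w : List Sigma)
    (M : S × ℕ → Option LaVal) : ℕ :=
  ∑ p ∈ A.allStates.toFinset ×ˢ Finset.range (w.length + 1) with (M p).isSome, A.outDeg p.1

theorem SubNFA.tablePotential_laRecord [DecidableEq S] {A B : SubNFA Sigma S} {w : List Sigma}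
    {q : S} {i : ℕ} (h : A.IsConfig w B q i) {M : S × ℕ → Option LaVal} (hM : ¬(M (q, i)).isSome)
    (r : LaResult) :
    A.tablePotential w (laRecord M q i r) = A.outDeg q + A.tablePotential w M := by
  have hmem : (q, i) ∈ A.allStates.toFinset ×ˢ Finset.range (w.length + 1) := by
    simpa using ⟨mem_allStates h.mem_comps h.mem_Q, h.le_length⟩
  simp only [tablePotential, isSome_laRecord, Finset.filter_or, Finset.filter_eq', if_pos hmem]
  rw [← Finset.insert_eq, Finset.sum_insert (a := (q, i)) (by simp [hM])]

theorem SubNFA.tablePotential_le [DecidableEq S] (A : SubNFA Sigma S) (w : List Sigma)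
    (M : S × ℕ → Option LaVal) :
    A.tablePotential w M ≤ (w.length + 1) * ∑ q ∈ A.allStates.toFinset, A.outDeg q := by
  calc A.tablePotential w M
      ≤ ∑ p ∈ A.allStates.toFinset ×ˢ Finset.range (w.length + 1), A.outDeg p.1 :=
        Finset.sum_le_sum_of_subset (Finset.filter_subset _ _)
    _ = (w.length + 1) * ∑ q ∈ A.allStates.toFinset, A.outDeg q := by
        simp [Finset.sum_product, Finset.mul_sum]

/-- The amortized cost of a sequence of calls turning the table `M` into `M'`: the sequence makes
`n` calls in total, its credit `k` and the gain of potential pay for them, and the ranks of the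
newly recorded pairs lie in `U`. -/
structure Amortized [DecidableEq S] (A : SubNFA Sigma S) (w : List Sigma)
    (U : Set (ℕ ×ₗ ℕ ×ₗ ℕ)) (k : ℕ) (M M' : S × ℕ → Option LaVal) (n : ℕ) : Prop where
  recorded : ∀ p, (M' p).isSome → (M p).isSome ∨ A.callRank w p ∈ U
  cost : n + A.tablePotential w M ≤ k + A.tablePotential w M'

namespace Amortized

variable [DecidableEq S] {A B : SubNFA Sigma S} {w : List Sigma} {U V : Set (ℕ ×ₗ ℕ ×ₗ ℕ)}
  {k k' n n' i : ℕ} {q : S} {M M₁ M₂ : S × ℕ → Option LaVal}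

theorem refl (hn : n ≤ k) : Amortized A w U k M M n :=
  ⟨fun _ => .inl, Nat.add_le_add_right hn _⟩

theorem mono (h : Amortized A w U k M M₁ n) (hUV : U ⊆ V) : Amortized A w V k M M₁ n :=
  ⟨fun p hp => (h.recorded p hp).imp_right (@hUV _), h.cost⟩

theorem trans (h₁ : Amortized A w U k M M₁ n) (h₂ : Amortized A w U k' M₁ M₂ n') :
    Amortized A w U (k + k') M M₂ (n + n') where
  recorded p hp := (h₂.recorded p hp).elim (h₁.recorded p) .inr
  cost := by linarith [h₁.cost, h₂.cost]

theorem record (h : Amortized A w (Set.Iio (A.callRank w (q, i))) k M M₁ n)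
    (hconf : A.IsConfig w B q i) (hM : M (q, i) = none) (hk : k ≤ A.outDeg q) (r : LaResult) :
    Amortized A w (Set.Iic (A.callRank w (q, i))) 1 M (laRecord M₁ q i r) (n + 1) where
  recorded p hp := by
    rcases isSome_laRecord.1 hp with rfl | hp
    · exact .inr Set.self_mem_Iic
    · exact (h.recorded p hp).imp_right fun hlt => Set.Iio_subset_Iic_self hlt
  cost := by
    have hM₁ : ¬(M₁ (q, i)).isSome := fun hsome =>
      (h.recorded _ hsome).elim (by simp [hM]) Set.self_notMem_Iio
    linarith [h.cost, SubNFA.tablePotential_laRecord hconf hM₁ r]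

end Amortized

theorem callCount_call_append (q : S) (i : ℕ) (s : List (LaRunElem S)) (r : LaResult) :
    callCount LaRunElem.isCall (.call q i :: s ++ [r.elem]) =
      callCount LaRunElem.isCall s + 1 := by
  cases r <;> simp [callCount, List.filter_cons, LaRunElem.isCall, LaResult.elem]

theorem callCount_append {β : Type} (f : β → Bool) (s t : List β) :
    callCount f (s ++ t) = callCount f s + callCount f t := by
  simp [callCount]

theorem Calls.amortized [DecidableEq S] {A B C : SubNFA Sigma S} {w : List Sigma} {q q' : S}
    {i i' n : ℕ} {M M' : S × ℕ → Option LaVal} (hc : Calls w B q i C q' i') (hA : A.WF)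
    (hLoop : A.NoEpsLoops) (h : A.IsConfig w B q i)
    (ih : A.IsConfig w C q' i' → Amortized A w (Set.Iic (A.callRank w (q', i'))) 1 M M' n) :
    Amortized A w (Set.Iio (A.callRank w (q, i))) 1 M M' n :=
  (ih (hc.isConfig hA h)).mono (Set.Iic_subset_Iio.2 (hc.callRank_lt hA hLoop h))

theorem MemoLaRun.amortized [DecidableEq S] {A B : SubNFA Sigma S} {w : List Sigma} {q : S}
    {i : ℕ} {M M' : S × ℕ → Option LaVal} {r : LaResult} {s : List (LaRunElem S)}
    (hrun : MemoLaRun w B q i M M' r s) (hA : A.WF) (hLoop : A.NoEpsLoops)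
    (h : A.IsConfig w B q i) :
    Amortized A w (Set.Iic (A.callRank w (q, i))) 1 M M' (callCount LaRunElem.isCall s) := by
  have arity_le {B : SubNFA Sigma S} {q : S} {i : ℕ} {t : SubTrans Sigma S}
      (h : A.IsConfig w B q i) (hF : q ∉ B.F) (hT : B.T q = t) : t.arity ≤ A.outDeg q :=
    hT ▸ SubNFA.arity_le_outDeg h.mem_comps h.mem_Q hF
  induction hrun with
  | @memoHit _ _ _ _ v hM => cases v <;> exact .refl le_rfl
  | accept hM | charFail hM => exact (Amortized.refl le_rfl).record h hM (Nat.zero_le _) _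
  | eps hM hF hT _ ih =>
    rw [callCount_call_append]
    exact (Calls.amortized (.eps hF hT) hA hLoop h ih).record h hM (arity_le h hF hT) _
  | charSucc hM hF hT hσ _ ih =>
    rw [callCount_call_append]
    exact (Calls.amortized (.char hF hT hσ) hA hLoop h ih).record h hM (arity_le h hF hT) _
  | branchNoFail hM hF hT _ _ ih =>
    rw [callCount_call_append]
    exact (Calls.amortized (.branchLeft hF hT) hA hLoop h ih).record h hM
      (le_trans one_le_two (arity_le h hF hT)) _
  | plaFail hM hF hT _ ih =>
    exact callCount_call_append _ _ _ .failure ▸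
      (Calls.amortized (.plaStart hF hT) hA hLoop h ih).record h hM
        (le_trans one_le_two (arity_le h hF hT)) _
  | branchFail hM hF hT _ _ ih₁ ih₂ =>
    rw [List.cons_append, callCount_call_append, callCount_append]
    exact ((Calls.amortized (.branchLeft hF hT) hA hLoop h ih₁).trans
      (Calls.amortized (.branchRight hF hT) hA hLoop h ih₂)).record h hM (arity_le h hF hT) _
  | plaSucc hM hF hT _ _ _ ih₁ ih₂ =>
    rw [List.cons_append, callCount_call_append, callCount_append]
    exact ((Calls.amortized (.plaStart hF hT) hA hLoop h ih₁).trans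
      (Calls.amortized (.plaNext hF hT) hA hLoop h ih₂)).record h hM (arity_le h hF hT) _

/-- **Theorem 3** (linear-time complexity of `Memo-la`): for every la-NFA `A`, every
input string `w`, and every position `i ∈ {0, …, |w|}`, the call
`Memo-la^{M0}_{A,w}(q0, i)` terminates, and the total number of recursive calls it
makes is at most `#in(A) · |P| · (|w| + 1)`. -/
theorem memoLa_linear_time {Sigma S : Type} [DecidableEq S]
    (A : SubNFA Sigma S) (hWF : A.WF) (hLa : A.IsLaNFA) (hLoop : A.NoEpsLoops)
    (w : List Sigma) (i : ℕ) (hi : i ≤ w.length) :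
    ∃ (M' : S × ℕ → Option LaVal) (r : LaResult) (s : List (LaRunElem S)),
      MemoLaRun w A A.q0 i (fun _ => none) M' r s ∧
        callCount LaRunElem.isCall s ≤ A.inDegMax * A.allStates.length * (w.length + 1) := by
  have h : A.IsConfig w A A.q0 i := ⟨A.self_mem_comps, (hWF.1 A A.self_mem_comps).1, hi⟩
  obtain ⟨M', r, s, hrun⟩ := h.exists_memoLaRun hWF hLa hLoop fun _ => none
  refine ⟨M', r, s, hrun, ?_⟩
  have hcost := (hrun.amortized hWF hLoop h).cost
  calc callCount LaRunElem.isCall s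
      ≤ 1 + A.tablePotential w M' := le_of_add_le_left hcost
    _ ≤ (w.length + 1) * (∑ q ∈ A.allStates.toFinset, A.outDeg q + 1) := by
        linarith [A.tablePotential_le w M', Nat.zero_le w.length]
    _ ≤ (w.length + 1) * ∑ q ∈ A.allStates.toFinset, A.inDeg q :=
        Nat.mul_le_mul_left _ hWF.sum_outDeg_lt_sum_inDeg
    _ ≤ (w.length + 1) * (A.inDegMax * A.allStates.length) :=
        Nat.mul_le_mul_left _ A.sum_inDeg_le
    _ = A.inDegMax * A.allStates.length * (w.length + 1) := mul_comm _ _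

end RegexMemo
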